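/- Let μ be a Strongly Rayleigh probability measure on the subsets of [n] with μ(∅) = 0, and let A ∈ M_n(ℂ) be hermitian. Then: (1) the expected characteristic polynomial E_μ χ[A(S)] := Σ_{S⊆[n]} μ(S)·χ[A(S)] is real rooted; (2) there exists S ⊆ [n] with μ(S) > 0 such that the largest eigenvalue of A(S) is at most the largest root of E_μ χ[A(S)]; and (3) E_μ χ[A(S)](x) = [ P̄_μ(∂_1,…,∂_n) det(Z−A) ]|_{z_1=⋯=z_n=x}, where Z = diag(z_1,…,z_n) and P̄_μ denotes the flip of the generating polynomial P_μ of μ. -/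

import Mathlib

/-- A multivariate real polynomial is real stable if it does not vanish when all
variables take values in the open upper half plane. -/
def RealStable {σ : Type*} (p : MvPolynomial σ ℝ) : Prop :=
  ∀ z : σ → ℂ, (∀ i, 0 < (z i).im) → (MvPolynomial.aeval z) p ≠ 0

/-- the generating polynomial `P_μ = Σ_S μ(S) z^S` of a measure on subsets of `[n]` -/
noncomputable def genPoly {n : ℕ} (μ : Finset (Fin n) → ℝ) : MvPolynomial (Fin n) ℝ :=
  ∑ S : Finset (Fin n), MvPolynomial.C (μ S) * ∏ i ∈ S, MvPolynomial.X i

/-- the flip `P̄_μ = Σ_S μ(S) z^{[n]∖S}` of the generating polynomial, with complex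
coefficients -/
noncomputable def flipGenPolyC {n : ℕ} (μ : Finset (Fin n) → ℝ) :
    MvPolynomial (Fin n) ℂ :=
  ∑ S : Finset (Fin n), MvPolynomial.C ((μ S : ℝ) : ℂ) * ∏ i ∈ Sᶜ, MvPolynomial.X i

/-- the principal submatrix `A(S)` -/
def subMat {n : ℕ} (A : Matrix (Fin n) (Fin n) ℂ) (S : Finset (Fin n)) :
    Matrix {x // x ∈ S} {x // x ∈ S} ℂ :=
  A.submatrix Subtype.val Subtype.val

/-- the expected characteristic polynomial `E_μ χ[A(S)] = Σ_S μ(S)·χ[A(S)]` -/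
noncomputable def expCharPoly {n : ℕ} (μ : Finset (Fin n) → ℝ)
    (A : Matrix (Fin n) (Fin n) ℂ) : Polynomial ℂ :=
  ∑ S : Finset (Fin n), Polynomial.C ((μ S : ℝ) : ℂ) * (subMat A S).charpoly

/-- `det(Z - A)` as a multivariate polynomial, `Z = diag(z₁,…,zₙ)` -/
noncomputable def detZSub {n : ℕ} (A : Matrix (Fin n) (Fin n) ℂ) :
    MvPolynomial (Fin n) ℂ :=
  (Matrix.diagonal (fun i => MvPolynomial.X i) - A.map MvPolynomial.C).det

/-- applying the differential-operator monomial `∂^m` to `p` -/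
noncomputable def applyMon {σ : Type*} [Fintype σ] {R : Type*} [CommSemiring R]
    (m : σ →₀ ℕ) (p : MvPolynomial σ R) : MvPolynomial σ R :=
  (Finset.univ.toList (α := σ)).foldr
    (fun i g => (fun h => MvPolynomial.pderiv i h)^[m i] g) p

/-- `q(∂)p`: substitute `∂/∂zᵢ` for `zᵢ` in `q` and apply the resulting operator to `p`. -/
noncomputable def diffOp {σ : Type*} [Fintype σ] {R : Type*} [CommSemiring R]
    (q p : MvPolynomial σ R) : MvPolynomial σ R :=
  ∑ m ∈ q.support, MvPolynomial.coeff m q • applyMon m p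

/-!
The coefficient of `∏_{i ∈ U ∖ S} zᵢ` in `det (M[U] + diag z)` is the principal minor `M[S]`. Hence
each `∂ᵢ` deletes the row and column `i` of `Z - A`, which is the differential formula; and
`∑_S μ(S) det (x - A)[S]` pairs the coefficients of the stable polynomial `P_μ` with those of
`det (x - A + Z)`, which has no zero with all `Im zᵢ > -Im x`. Adding one variable at a time, such a
pairing of coefficients does not vanish, so the expected characteristic polynomial has no zero in
the upper half plane, nor, being real, in the lower one.

Scaling `zᵢ` by `wᵢ > 0` preserves stability, so all the polynomials `∑_S w^S μ(S) χ[A(S)]` are real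
rooted. If `f + t g` is real rooted for all `t > 0` and `f`, `g` are eventually nonnegative, then
`f` or `g` is positive beyond the last root of `f + g`. Applied to one coordinate of the cube after
the other, this yields a single summand `μ(S) χ[A(S)]` that is positive beyond the last root of
the whole sum.
-/

section Multiaffine

variable {ι R M : Type*} [CommSemiring R] [AddCommMonoid M] [Module R M]

/-- The value at `w` of the multiaffine polynomial `∑_{S ⊆ U} a_S w^S`. The coefficients live in an
`R`-module so that families of complex numbers and of univariate polynomials are both covered. -/
def multiaffine (U : Finset ι) (a : Finset ι → M) (w : ι → R) : M :=
  ∑ S ∈ U.powerset, (∏ i ∈ S, w i) • a S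

/-- The value at `z` of the flip `∑_{S ⊆ U} a_S z^{U ∖ S}` of `multiaffine U a`. -/
def multiaffineFlip [DecidableEq ι] (U : Finset ι) (a : Finset ι → M) (z : ι → R) : M :=
  ∑ S ∈ U.powerset, (∏ i ∈ U \ S, z i) • a S

theorem multiaffine_one (U : Finset ι) (a : Finset ι → M) :
    multiaffine U a (1 : ι → R) = ∑ S ∈ U.powerset, a S := by
  simp [multiaffine]

theorem multiaffine_add_smul (U : Finset ι) (a b : Finset ι → M) (s : R) (w : ι → R) :
    multiaffine U (a + s • b) w = multiaffine U a w + s • multiaffine U b w := by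
  simp only [multiaffine, Pi.add_apply, Pi.smul_apply, smul_add, Finset.sum_add_distrib,
    Finset.smul_sum, smul_comm s]

variable [DecidableEq ι]

theorem multiaffineFlip_add_smul (U : Finset ι) (a b : Finset ι → M) (t : R) (z : ι → R) :
    multiaffineFlip U (a + t • b) z = multiaffineFlip U a z + t • multiaffineFlip U b z := by
  simp only [multiaffineFlip, Pi.add_apply, Pi.smul_apply, smul_add, Finset.sum_add_distrib,
    Finset.smul_sum, smul_comm t]

theorem multiaffine_insert_update {U : Finset ι} {i : ι} (hi : i ∉ U) (a : Finset ι → M)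
    (w : ι → R) (s : R) :
    multiaffine (insert i U) a (Function.update w i s) =
      multiaffine U a w + s • multiaffine U (fun S => a (insert i S)) w := by
  simp only [multiaffine, Finset.sum_powerset_insert hi, Finset.smul_sum]
  congr 1 <;> refine Finset.sum_congr rfl fun S hS => ?_
  all_goals have hiS : i ∉ S := fun h => hi (Finset.mem_powerset.1 hS h)
  · rw [Finset.prod_update_of_notMem hiS]
  · rw [Finset.prod_insert hiS, Finset.prod_update_of_notMem hiS, Function.update_self, mul_smul]

theorem multiaffineFlip_insert_update {U : Finset ι} {i : ι} (hi : i ∉ U) (a : Finset ι → M)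
    (z : ι → R) (t : R) :
    multiaffineFlip (insert i U) a (Function.update z i t) =
      multiaffineFlip U (fun S => a (insert i S)) z + t • multiaffineFlip U a z := by
  simp only [multiaffineFlip, Finset.sum_powerset_insert hi, Finset.smul_sum]
  rw [add_comm]
  congr 1 <;> refine Finset.sum_congr rfl fun S hS => ?_
  all_goals
    have hiS : i ∉ S := fun h => hi (Finset.mem_powerset.1 hS h)
    have hi' : i ∉ U \ S := fun h => hi (Finset.mem_sdiff.1 h).1
  · rw [Finset.insert_sdiff_insert, Finset.sdiff_insert_of_notMem hi,
      Finset.prod_update_of_notMem hi']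
  · rw [Finset.insert_sdiff_of_notMem _ hiS, Finset.prod_insert hi',
      Finset.prod_update_of_notMem hi', Function.update_self, mul_smul]

end Multiaffine

section Pairing

open Filter Topology

theorem forall_im_update_gt {ι : Type*} [DecidableEq ι] {c : ℝ} {z : ι → ℂ}
    (hz : ∀ j, c < (z j).im) (i : ι) {t : ℂ} (ht : c < t.im) :
    ∀ j, c < (Function.update z i t j).im :=
  (Function.forall_update_iff z fun _ u => c < u.im).2 ⟨ht, fun j _ => hz j⟩

/-- For `b + c = 0` the expression `a + t b + s c + t s d` vanishes at `t = (s b - a) / (b + s d)`,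
and letting `s → i∞` contradicts the position of this zero. -/
theorem add_ne_zero_of_bilinear_ne_zero {a b c d : ℂ} {ε : ℝ} (hε : 0 < ε)
    (h : ∀ t s : ℂ, -ε < t.im → 0 < s.im → a + t * b + s * c + t * s * d ≠ 0)
    (hbd : ∀ s : ℂ, 0 < s.im → b + s * d ≠ 0) : b + c ≠ 0 := by
  intro hbc
  obtain rfl : c = -b := by linear_combination hbc
  have him : ∀ s : ℂ, 0 < s.im → ((s * b - a) / (b + s * d)).im ≤ -ε := fun s hs => by
    by_contra! hlt
    refine h _ s hlt hs ?_
    have := hbd s hs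
    field_simp
    ring
  rcases eq_or_ne d 0 with rfl | hd
  · have hb : b ≠ 0 := by simpa using hbd Complex.I (by simp)
    have hpos : 0 < |(a / b).im| + 1 := by positivity
    have hle := him ((|(a / b).im| + 1 : ℝ) * Complex.I) (by simpa using hpos)
    rw [mul_zero, add_zero, sub_div, mul_div_cancel_right₀ _ hb, Complex.sub_im,
      Complex.im_ofReal_mul, Complex.I_im, mul_one] at hle
    linarith [le_abs_self (a / b).im]
  · have hlim : Tendsto (fun r : ℝ => ((Complex.I * b - r * a) / (r * b + Complex.I * d)).im)
        (𝓝[>] 0) (𝓝 (b / d).im) := by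
      have hcont : ContinuousAt
          (fun r : ℝ => ((Complex.I * b - r * a) / (r * b + Complex.I * d)).im) 0 :=
        Complex.continuous_im.continuousAt.comp <|
          ContinuousAt.div (by fun_prop) (by fun_prop) (by simp [hd])
      simpa [mul_div_mul_left, ContinuousAt] using hcont.tendsto.mono_left nhdsWithin_le_nhds
    have hβ : (b / d).im ≤ -ε := by
      refine le_of_tendsto hlim ?_
      filter_upwards [self_mem_nhdsWithin] with r hr
      have hr0 : (r : ℂ) ≠ 0 := by exact_mod_cast (Set.mem_Ioi.1 hr).ne'
      have hs : (Complex.I * b - r * a) / (r * b + Complex.I * d) =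
          (Complex.I / r * b - a) / (b + Complex.I / r * d) := by
        rw [← mul_div_mul_left _ (b + _) hr0]
        congr 1 <;> field_simp
      exact hs ▸ him (Complex.I / r) (by simpa using hr)
    refine hbd (-(b / d)) (by rw [Complex.neg_im]; linarith) ?_
    field_simp
    ring

theorem sum_powerset_mul_ne_zero {ι : Type*} [DecidableEq ι] {ε : ℝ} (hε : 0 < ε)
    {U : Finset ι} {P g : Finset ι → ℂ}
    (hP : ∀ w : ι → ℂ, (∀ i, 0 < (w i).im) → multiaffine U P w ≠ 0)
    (hg : ∀ V ⊆ U, ∀ z : ι → ℂ, (∀ i, -ε < (z i).im) → multiaffineFlip V g z ≠ 0) :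
    ∑ S ∈ U.powerset, P S * g S ≠ 0 := by
  induction U using Finset.induction_on generalizing P g with
  | empty =>
    have hP₀ : P ∅ ≠ 0 := by simpa [multiaffine] using hP (fun _ => Complex.I) (by simp)
    have hg₀ : g ∅ ≠ 0 := by
      simpa [multiaffineFlip] using hg ∅ le_rfl (fun _ => 0) (fun _ => by simpa using hε)
    simpa using ⟨hP₀, hg₀⟩
  | insert i V hi ih =>
    let P' : Finset ι → ℂ := fun S => P (insert i S)
    let g' : Finset ι → ℂ := fun S => g (insert i S)
    have hPs : ∀ s : ℂ, 0 < s.im → ∀ w : ι → ℂ, (∀ j, 0 < (w j).im) →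
        multiaffine V (P + s • P') w ≠ 0 := fun s hs w hw => by
      rw [multiaffine_add_smul, ← multiaffine_insert_update hi]
      exact hP _ (forall_im_update_gt hw i hs)
    have hgt : ∀ t : ℂ, -ε < t.im → ∀ W ⊆ V, ∀ z : ι → ℂ, (∀ j, -ε < (z j).im) →
        multiaffineFlip W (g' + t • g) z ≠ 0 := fun t ht W hW z hz => by
      rw [multiaffineFlip_add_smul, ← multiaffineFlip_insert_update fun h => hi (hW h)]
      exact hg _ (Finset.insert_subset_insert i hW) _ (forall_im_update_gt hz i ht)
    have hgV : ∀ W ⊆ V, ∀ z : ι → ℂ, (∀ j, -ε < (z j).im) → multiaffineFlip W g z ≠ 0 :=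
      fun W hW => hg W (hW.trans (Finset.subset_insert i V))
    rw [Finset.sum_powerset_insert hi]
    refine add_ne_zero_of_bilinear_ne_zero (a := ∑ S ∈ V.powerset, P S * g' S)
      (d := ∑ S ∈ V.powerset, P' S * g S) hε (fun t s ht hs => ?_) fun s hs => ?_
    · convert ih (hPs s hs) (hgt t ht) using 1
      simp only [Finset.mul_sum, ← Finset.sum_add_distrib, Pi.add_apply, Pi.smul_apply, smul_eq_mul]
      exact Finset.sum_congr rfl fun S _ => by ring
    · convert ih (hPs s hs) hgV using 1
      simp only [Finset.mul_sum, ← Finset.sum_add_distrib, Pi.add_apply, Pi.smul_apply, smul_eq_mul]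
      exact Finset.sum_congr rfl fun S _ => by ring

end Pairing

section PrincipalMinor

open Matrix

variable {ι R : Type*} [DecidableEq ι] [CommRing R]

/-- The determinant of the principal submatrix of `M` on the rows and columns in `S`. -/
def principalMinor (M : Matrix ι ι R) (S : Finset ι) : R :=
  (M.submatrix (Subtype.val : {i // i ∈ S} → ι) Subtype.val).det

theorem principalMinor_map {R' : Type*} [CommRing R'] (f : R →+* R') (M : Matrix ι ι R)
    (S : Finset ι) : principalMinor (M.map f) S = f (principalMinor M S) := by
  rw [principalMinor, principalMinor, f.map_det]
  rfl

theorem principalMinor_univ [Fintype ι] (M : Matrix ι ι R) :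
    principalMinor M Finset.univ = M.det :=
  det_submatrix_equiv_self (Equiv.subtypeUnivEquiv Finset.mem_univ) M

theorem det_piecewise_row_diagonal [Fintype ι] (M : Matrix ι ι R) (S : Finset ι) (d : ι → R) :
    (of (S.piecewise M.row (diagonal d).row)).det = principalMinor M S * ∏ i ∈ Sᶜ, d i := by
  have hS : toSquareBlockProp (of (S.piecewise M.row (diagonal d).row)) (· ∈ S) =
      M.submatrix Subtype.val Subtype.val := by
    ext ⟨i, hi⟩ j
    simp [toSquareBlockProp, hi]
  have hSc : toSquareBlockProp (of (S.piecewise M.row (diagonal d).row)) (¬ · ∈ S) =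
      diagonal fun i : {i // ¬ i ∈ S} => d i := by
    ext ⟨i, hi⟩ j
    simp [toSquareBlockProp, diagonal_apply, Subtype.ext_iff, hi]
  rw [twoBlockTriangular_det _ (· ∈ S), hS, hSc, det_diagonal, principalMinor,
    Finset.prod_subtype Sᶜ fun i => Finset.mem_compl]
  · congr!
  · intro i hi j hj
    have hij : i ≠ j := fun h => hi (h ▸ hj)
    simp [hi, hij]

/-- Expanding the rows of `M + diagonal z` in `V` by multilinearity, the rows outside `V` being
replaced by those of the identity. -/
theorem principalMinor_add_diagonal [Finite ι] (M : Matrix ι ι R) (z : ι → R) (V : Finset ι) :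
    principalMinor (M + diagonal z) V = multiaffineFlip V (principalMinor M) z := by
  cases nonempty_fintype ι
  let D : Matrix ι ι R := diagonal (V.piecewise z 1)
  have hrows : V.piecewise (M.row + D.row) D.row =
      V.piecewise (M + diagonal z).row (diagonal 1).row := by
    ext i j
    by_cases hi : i ∈ V <;> simp [hi, D, diagonal_apply, Pi.single_apply, one_apply, eq_comm]
  calc principalMinor (M + diagonal z) V
      = (of (V.piecewise (M.row + D.row) D.row)).det := by
        rw [hrows, det_piecewise_row_diagonal]
        simp
    _ = ∑ S ∈ V.powerset, (of (S.piecewise M.row D.row)).det :=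
        (detRowAlternating (n := ι) (R := R)).toMultilinearMap.map_piecewise_add M.row D.row V
    _ = multiaffineFlip V (principalMinor M) z := by
        refine Finset.sum_congr rfl fun S _ => ?_
        rw [det_piecewise_row_diagonal, Finset.prod_piecewise]
        simp [mul_comm, Finset.inter_comm, Finset.sdiff_eq_inter_compl]

/-- If `(diagonal z - A) v = 0`, then the imaginary part of `v* A v = ∑ zᵢ |vᵢ|²` is both zero and
positive. -/
theorem det_diagonal_sub_ne_zero_of_isHermitian [Fintype ι] {A : Matrix ι ι ℂ} (hA : A.IsHermitian)
    {z : ι → ℂ} (hz : ∀ i, 0 < (z i).im) : (diagonal z - A).det ≠ 0 := by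
  intro h
  obtain ⟨v, hv, hv0⟩ := exists_mulVec_eq_zero_iff.2 h
  have hform : star v ⬝ᵥ (diagonal z *ᵥ v) = star v ⬝ᵥ (A *ᵥ v) := by
    rw [sub_mulVec, sub_eq_zero] at hv0
    rw [hv0]
  have him : (star v ⬝ᵥ (diagonal z *ᵥ v)).im = ∑ i, (z i).im * Complex.normSq (v i) := by
    simp only [dotProduct, mulVec_diagonal, Complex.im_sum]
    refine Finset.sum_congr rfl fun i _ => ?_
    simp only [Pi.star_apply, RCLike.star_def, Complex.mul_im, Complex.mul_re, Complex.conj_re,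
      Complex.conj_im, Complex.normSq_apply]
    ring
  obtain ⟨i, hi⟩ := Function.ne_iff.1 hv
  have hpos : 0 < ∑ i, (z i).im * Complex.normSq (v i) :=
    Finset.sum_pos' (fun i _ => mul_nonneg (hz i).le (Complex.normSq_nonneg _))
      ⟨i, Finset.mem_univ _, mul_pos (hz i) (Complex.normSq_pos.2 hi)⟩
  rw [← him, hform] at hpos
  exact hpos.ne' (hA.im_star_dotProduct_mulVec_self v)

theorem multiaffineFlip_principalMinor_ne_zero [Finite ι] {A : Matrix ι ι ℂ} (hA : A.IsHermitian)
    {x : ℂ} {z : ι → ℂ} (hz : ∀ i, -x.im < (z i).im) (V : Finset ι) :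
    multiaffineFlip V (principalMinor (diagonal (fun _ => x) - A)) z ≠ 0 := by
  rw [← principalMinor_add_diagonal, sub_add_eq_add_sub, diagonal_add, principalMinor,
    submatrix_sub, Pi.sub_apply, Pi.sub_apply, submatrix_diagonal _ _ Subtype.val_injective]
  refine det_diagonal_sub_ne_zero_of_isHermitian (hA.submatrix _) fun i => ?_
  have := hz i
  rw [Function.comp_apply, Complex.add_im]
  linarith

theorem sum_mul_principalMinor_ne_zero [Fintype ι] {A : Matrix ι ι ℂ} (hA : A.IsHermitian) {x : ℂ}
    (hx : 0 < x.im) {P : Finset ι → ℂ}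
    (hP : ∀ w : ι → ℂ, (∀ i, 0 < (w i).im) → multiaffine Finset.univ P w ≠ 0) :
    ∑ S, P S * principalMinor (diagonal (fun _ => x) - A) S ≠ 0 := by
  rw [← Finset.powerset_univ]
  exact sum_powerset_mul_ne_zero hx hP fun V _ z hz =>
    multiaffineFlip_principalMinor_ne_zero hA hz V

end PrincipalMinor

section RealRooted

open Polynomial Filter Topology

theorem splits_real_of_forall_im_eq_zero {f : ℝ[X]} (h : ∀ z : ℂ, aeval z f = 0 → z.im = 0) :
    f.Splits := by
  refine (IsAlgClosed.splits (f.map (algebraMap ℝ ℂ))).of_splits_map _ fun z hz => ?_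
  rw [mem_roots', IsRoot.def, eval_map_algebraMap] at hz
  exact ⟨z.re, Complex.ext rfl (h z hz.2).symm⟩

theorem aeval_complex_ofReal (f : ℝ[X]) (x : ℝ) :
    aeval (x : ℂ) f = ((f.eval x : ℝ) : ℂ) := by
  rw [← Complex.coe_algebraMap, aeval_algebraMap_apply, coe_aeval_eq_eval]

theorem im_eq_zero_of_splits {f : ℝ[X]} (hf : f.Splits) (hf₀ : f ≠ 0) {z : ℂ}
    (hz : aeval z f = 0) : z.im = 0 := by
  rw [← eval_map_algebraMap] at hz
  obtain ⟨x, rfl⟩ := hf.mem_range_of_isRoot hf₀ hz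
  exact Complex.ofReal_im x

/-- `-f / g` is an open map near `z`, so it attains small positive real values there. -/
theorem exists_mem_aeval_add_smul_eq_zero {f g : ℝ[X]} (hf : f ≠ 0) {z : ℂ} (hfz : aeval z f = 0)
    (hgz : aeval z g ≠ 0) {s : Set ℂ} (hs : s ∈ 𝓝 z) :
    ∃ w ∈ s, ∃ t : ℝ, 0 < t ∧ aeval w (f + t • g) = 0 := by
  have hg : ∀ᶠ w in 𝓝 z, aeval w g ≠ 0 := g.continuous_aeval.continuousAt.eventually_ne hgz
  have hana : AnalyticAt ℂ (fun w : ℂ => -aeval w f / aeval w g) z :=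
    (AnalyticAt.aeval_polynomial analyticAt_id f).neg.div
      (AnalyticAt.aeval_polynomial analyticAt_id g) hgz
  rcases hana.eventually_constant_or_nhds_le_map_nhds with hconst | hopen
  · have hroots : {w | (f.map (algebraMap ℝ ℂ)).IsRoot w} ∈ 𝓝 z := by
      filter_upwards [hconst, hg] with w hw hgw
      simpa [hfz, hgw, eval_map_algebraMap] using hw
    exact absurd ((Polynomial.map_eq_zero _).1
      (eq_zero_of_infinite_isRoot _ (infinite_of_mem_nhds z hroots))) hf
  · have himage := hopen (image_mem_map (inter_mem hs hg))
    have hreal : Tendsto (fun t : ℝ => (t : ℂ)) (𝓝[>] 0) (𝓝 (-aeval z f / aeval z g)) := by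
      simpa [hfz] using
        (Complex.continuous_ofReal.tendsto 0).mono_left (nhdsWithin_le_nhds (s := Set.Ioi 0))
    obtain ⟨t, ⟨w, ⟨hws, hgw⟩, hw⟩, ht⟩ :=
      ((hreal.eventually himage).and self_mem_nhdsWithin).exists
    refine ⟨w, hws, t, ht, ?_⟩
    rw [map_add, map_smul, Complex.real_smul, ← (div_eq_iff hgw).1 hw, add_neg_cancel]

theorem splits_of_forall_pos_splits_add_smul {f g : ℝ[X]}
    (h : ∀ t : ℝ, 0 < t → (f + t • g).Splits) : f.Splits := by
  rcases eq_or_ne f 0 with rfl | hf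
  · exact Splits.zero
  refine splits_real_of_forall_im_eq_zero fun z hz => ?_
  by_contra hzim
  have hvanish : ∀ t : ℝ, 0 < t → ∀ w : ℂ, w.im ≠ 0 → aeval w (f + t • g) = 0 → f + t • g = 0 :=
    fun t ht w hw hw₀ => by_contra fun h₀ => hw (im_eq_zero_of_splits (h t ht) h₀ hw₀)
  by_cases hgz : aeval z g = 0
  · have hg : ∀ t : ℝ, 0 < t → f + t • g = 0 := fun t ht =>
      hvanish t ht z hzim (by simp [hz, hgz])
    have hfg := hg 1 one_pos
    have hfg₂ := hg 2 two_pos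
    rw [one_smul] at hfg
    rw [two_smul, ← add_assoc, hfg, zero_add] at hfg₂
    exact hf (by rwa [hfg₂, add_zero] at hfg)
  · obtain ⟨w, hw, t, ht, hwt⟩ := exists_mem_aeval_add_smul_eq_zero hf hz hgz
      (Complex.continuous_im.continuousAt.eventually_ne hzim)
    have hzt := congrArg (aeval z) (hvanish t ht w hw hwt)
    simp [hz, hgz, ht.ne'] at hzt

theorem splits_add_smul_comm {f g : ℝ[X]} (h : ∀ t : ℝ, 0 < t → (f + t • g).Splits) {t : ℝ}
    (ht : 0 < t) : (g + t • f).Splits := by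
  have hfg : g + t • f = C t * (f + t⁻¹ • g) := by
    rw [← smul_eq_C_mul, smul_add, smul_inv_smul₀ ht.ne', add_comm]
  rw [hfg]
  exact (h _ (inv_pos.2 ht)).C_mul t

/-- A real zero of even order leaves the real line when `f` is pushed up. -/
theorem exists_pos_not_splits_add_smul_of_isLocalMin {f g : ℝ[X]} (hf : f ≠ 0) {y : ℝ}
    (hy : f.eval y = 0) (hmin : IsLocalMin (fun x => f.eval x) y) (hg : 0 < g.eval y) :
    ∃ t : ℝ, 0 < t ∧ ¬(f + t • g).Splits := by
  have hnear : ∀ᶠ x in 𝓝 y, 0 ≤ f.eval x ∧ 0 < g.eval x := by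
    filter_upwards [hmin, g.continuous.continuousAt.eventually (lt_mem_nhds hg)] with x hfx hgx
    exact ⟨hy ▸ hfx, hgx⟩
  obtain ⟨w, hw, t, ht, hwt⟩ := exists_mem_aeval_add_smul_eq_zero (g := g) (z := y) hf
    (by simp [aeval_complex_ofReal, hy]) (by simpa [aeval_complex_ofReal] using hg.ne')
    (Complex.continuous_re.continuousAt.eventually hnear)
  refine ⟨t, ht, fun hsplit => ?_⟩
  have hpos : ∀ x, 0 ≤ f.eval x → 0 < g.eval x → 0 < (f + t • g).eval x := fun x hfx hgx => by
    rw [eval_add, eval_smul, smul_eq_mul]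
    positivity
  have hne : f + t • g ≠ 0 := fun h₀ => (hpos y hy.ge hg).ne' (by rw [h₀, eval_zero])
  obtain ⟨x, rfl⟩ : ∃ x : ℝ, (x : ℂ) = w :=
    ⟨w.re, Complex.ext rfl (im_eq_zero_of_splits hsplit hne hwt).symm⟩
  rw [aeval_complex_ofReal] at hwt
  exact (hpos x hw.1 hw.2).ne' (by exact_mod_cast hwt)

/-- The multiplier is the maximum of `-f / g` on `[a, b]`. -/
theorem exists_nonneg_isLocalMin_add_mul {f g : ℝ → ℝ} {a b c : ℝ}
    (hf : ContinuousOn f (Set.Icc a b)) (hg : ContinuousOn g (Set.Icc a b))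
    (hgpos : ∀ x ∈ Set.Icc a b, 0 < g x) (hc : c ∈ Set.Icc a b) (hfc : f c ≤ 0)
    (hfa : 0 < f a) (hfb : 0 < f b) :
    ∃ m, 0 ≤ m ∧ ∃ y ∈ Set.Ioo a b, f y + m * g y = 0 ∧ IsLocalMin (fun x => f x + m * g x) y := by
  obtain ⟨y, hy, hmax⟩ := isCompact_Icc.exists_isMaxOn ⟨c, hc⟩
    (hf.neg.div hg fun x hx => (hgpos x hx).ne')
  have hm : 0 ≤ -f y / g y :=
    (div_nonneg (neg_nonneg.2 hfc) (hgpos c hc).le).trans (hmax hc)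
  have hfy : f y ≤ 0 := by
    rwa [le_div_iff₀ (hgpos y hy), zero_mul, neg_nonneg] at hm
  have hval : f y + -f y / g y * g y = 0 := by
    rw [div_mul_cancel₀ _ (hgpos y hy).ne', add_neg_cancel]
  have hyIoo : y ∈ Set.Ioo a b :=
    ⟨hy.1.lt_of_ne fun h => hfy.not_gt (h ▸ hfa), hy.2.lt_of_ne fun h => hfy.not_gt (h ▸ hfb)⟩
  refine ⟨_, hm, y, hyIoo, hval, ?_⟩
  filter_upwards [Ioo_mem_nhds hyIoo.1 hyIoo.2] with x hx
  have hx' := Set.Ioo_subset_Icc_self hx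
  have hle : -f x / g x ≤ -f y / g y := hmax hx'
  rw [div_le_iff₀ (hgpos x hx')] at hle
  rw [hval]
  linarith

theorem exists_pos_not_splits_add_smul_of_eval_nonpos {f g : ℝ[X]} {a b c : ℝ}
    (hg : ∀ x ∈ Set.Icc a b, 0 < g.eval x) (hc : c ∈ Set.Icc a b) (hfc : f.eval c ≤ 0)
    (hfa : 0 < f.eval a) (hfb : 0 < f.eval b) : ∃ t : ℝ, 0 < t ∧ ¬(f + t • g).Splits := by
  obtain ⟨m, hm, y, hy, hval, hmin⟩ := exists_nonneg_isLocalMin_add_mul f.continuous.continuousOn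
    g.continuous.continuousOn hg hc hfc hfa hfb
  have heval : ∀ x, (f + m • g).eval x = f.eval x + m * g.eval x := by simp
  have hne : f + m • g ≠ 0 := fun h₀ => by
    have ha : a ∈ Set.Icc a b := ⟨le_rfl, hc.1.trans hc.2⟩
    have := heval a
    rw [h₀, eval_zero] at this
    nlinarith [hg a ha]
  obtain ⟨t, ht, hsplit⟩ := exists_pos_not_splits_add_smul_of_isLocalMin hne
    ((heval y).trans hval) (by simpa only [heval] using hmin) (hg y (Set.Ioo_subset_Icc_self hy))
  exact ⟨m + t, by positivity, by rwa [add_smul, ← add_assoc]⟩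

theorem exists_isGreatest_setOf_nonpos {f : ℝ → ℝ} (hf : Continuous f)
    (hpos : ∀ᶠ x in atTop, 0 < f x) {x : ℝ} (hx : f x ≤ 0) :
    ∃ α, IsGreatest {y | f y ≤ 0} α := by
  obtain ⟨B, hB⟩ := eventually_atTop.1 hpos
  have hbdd : BddAbove {y | f y ≤ 0} :=
    ⟨B, fun y hy => le_of_not_ge fun h => (hB y h).not_ge hy⟩
  exact ⟨_, (isClosed_le hf continuous_const).csSup_mem ⟨x, hx⟩ hbdd, fun y hy => le_csSup hbdd hy⟩

theorem eventually_eval_pos {f : ℝ[X]} (hf : ∀ᶠ x in atTop, 0 ≤ f.eval x) (hf₀ : f ≠ 0) :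
    ∀ᶠ x in atTop, 0 < f.eval x := by
  filter_upwards [hf, eventually_atTop_not_isRoot f hf₀] with x hx hroot
  exact hx.lt_of_ne' hroot

theorem forall_eval_pos_of_forall_not_isRoot {f : ℝ[X]} (hf : ∀ᶠ x in atTop, 0 < f.eval x) {a : ℝ}
    (h : ∀ x, a < x → ¬f.IsRoot x) {x : ℝ} (hx : a < x) : 0 < f.eval x := by
  by_contra! hneg
  obtain ⟨y, hy, hxy⟩ := (hf.and (eventually_ge_atTop x)).exists
  obtain ⟨c, hc, hc₀⟩ := intermediate_value_Icc hxy f.continuous.continuousOn ⟨hneg, hy.le⟩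
  exact h c (hx.trans_le hc.1) hc₀

theorem eval_pos_of_sSup_isRoot_lt {f : ℝ[X]} (hf : ∀ᶠ x in atTop, 0 < f.eval x) {x : ℝ}
    (hx : sSup {y | f.IsRoot y} < x) : 0 < f.eval x := by
  have hne : f ≠ 0 := by
    rintro rfl
    simpa using hf.exists
  exact forall_eval_pos_of_forall_not_isRoot hf (fun y hy hroot =>
    hy.not_ge (le_csSup (finite_setOfPred_isRoot hne).bddAbove hroot)) hx

theorem exists_pos_not_splits_add_smul_of_isGreatest {f g : ℝ[X]} {α β : ℝ} (hαβ : α < β)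
    (hg : IsGreatest {x | g.eval x ≤ 0} α) (hf : IsGreatest {x | f.eval x ≤ 0} β)
    (hfα : 0 < f.eval α) : ∃ t : ℝ, 0 < t ∧ ¬(f + t • g).Splits := by
  have hright : ∀ᶠ x in 𝓝[>] α, 0 < f.eval x :=
    (f.continuous.continuousAt.eventually (lt_mem_nhds hfα)).filter_mono nhdsWithin_le_nhds
  obtain ⟨a, hfa, haα, haβ⟩ := (hright.and (Ioo_mem_nhdsGT hαβ)).exists
  refine exists_pos_not_splits_add_smul_of_eval_nonpos (a := a) (b := β + 1) (c := β)
    (fun x hx => ?_) ⟨haβ.le, by linarith⟩ hf.1 hfa ?_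
  · exact not_le.1 fun h => (haα.trans_le hx.1).not_ge (hg.2 h)
  · exact not_le.1 fun h => (lt_add_one β).not_ge (hf.2 h)

/-- If both `f` and `g` were nonpositive somewhere beyond `a`, compare the last points where this
happens: they are distinct as `f + g > 0`, and either order yields a combination that is not real
rooted. -/
theorem forall_eval_pos_or_of_forall_eval_add_pos {f g : ℝ[X]} (hf : ∀ᶠ x in atTop, 0 ≤ f.eval x)
    (hg : ∀ᶠ x in atTop, 0 ≤ g.eval x) (h : ∀ t : ℝ, 0 < t → (f + t • g).Splits) {a : ℝ}
    (ha : ∀ x, a < x → 0 < (f + g).eval x) :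
    (∀ x, a < x → 0 < f.eval x) ∨ ∀ x, a < x → 0 < g.eval x := by
  rcases eq_or_ne f 0 with rfl | hf₀
  · exact Or.inr (by simpa using ha)
  rcases eq_or_ne g 0 with rfl | hg₀
  · exact Or.inl (by simpa using ha)
  by_contra! hcon
  obtain ⟨⟨x, hx, hfx⟩, y, hy, hgy⟩ := hcon
  obtain ⟨α, hα⟩ :=
    exists_isGreatest_setOf_nonpos f.continuous (eventually_eval_pos hf hf₀) hfx
  obtain ⟨β, hβ⟩ :=
    exists_isGreatest_setOf_nonpos g.continuous (eventually_eval_pos hg hg₀) hgy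
  have hsumα := eval_add (R := ℝ) ▸ ha α (hx.trans_le (hα.2 hfx))
  have hsumβ := eval_add (R := ℝ) ▸ ha β (hy.trans_le (hβ.2 hgy))
  have hfα : f.eval α ≤ 0 := hα.1
  have hgβ : g.eval β ≤ 0 := hβ.1
  rcases lt_trichotomy α β with hlt | rfl | hlt
  · obtain ⟨t, ht, hsplit⟩ :=
      exists_pos_not_splits_add_smul_of_isGreatest hlt hα hβ (by linarith)
    exact hsplit (splits_add_smul_comm h ht)
  · linarith
  · obtain ⟨t, ht, hsplit⟩ :=
      exists_pos_not_splits_add_smul_of_isGreatest hlt hβ hα (by linarith)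
    exact hsplit (h t ht)

theorem eventually_eval_sum_nonneg {κ : Type*} {s : Finset κ} {F : κ → ℝ[X]}
    (hF : ∀ k ∈ s, ∀ᶠ x in atTop, 0 ≤ (F k).eval x) :
    ∀ᶠ x in atTop, 0 ≤ (∑ k ∈ s, F k).eval x := by
  filter_upwards [(eventually_all_finset s).2 hF] with x hx
  rw [eval_finsetSum]
  exact Finset.sum_nonneg hx

theorem exists_subset_forall_eval_pos {ι : Type*} {U : Finset ι} {F : Finset ι → ℝ[X]}
    (hF : ∀ S ⊆ U, ∀ᶠ x in atTop, 0 ≤ (F S).eval x)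
    (hsplit : ∀ w : ι → ℝ, (∀ i, 0 < w i) → (multiaffine U F w).Splits) {a : ℝ}
    (ha : ∀ x, a < x → 0 < (∑ S ∈ U.powerset, F S).eval x) :
    ∃ S ⊆ U, ∀ x, a < x → 0 < (F S).eval x := by
  classical
  induction U using Finset.induction_on generalizing F with
  | empty => exact ⟨∅, subset_rfl, by simpa using ha⟩
  | insert i V hi ih =>
    let F' : Finset ι → ℝ[X] := fun S => F (insert i S)
    have hFV : ∀ S ⊆ V, ∀ᶠ x in atTop, 0 ≤ (F S).eval x :=
      fun S hS => hF S (hS.trans (Finset.subset_insert i V))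
    have hFV' : ∀ S ⊆ V, ∀ᶠ x in atTop, 0 ≤ (F' S).eval x :=
      fun S hS => hF _ (Finset.insert_subset_insert i hS)
    have hcomb : ∀ w : ι → ℝ, (∀ j, 0 < w j) → ∀ t : ℝ, 0 < t →
        (multiaffine V F w + t • multiaffine V F' w).Splits := fun w hw t ht => by
      rw [← multiaffine_insert_update hi]
      exact hsplit _ ((Function.forall_update_iff w fun _ u => 0 < u).2 ⟨ht, fun j _ => hw j⟩)
    have hsplitV : ∀ w : ι → ℝ, (∀ j, 0 < w j) → (multiaffine V F w).Splits :=
      fun w hw => splits_of_forall_pos_splits_add_smul (hcomb w hw)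
    have hsplitV' : ∀ w : ι → ℝ, (∀ j, 0 < w j) → (multiaffine V F' w).Splits :=
      fun w hw => splits_of_forall_pos_splits_add_smul fun t => splits_add_smul_comm (hcomb w hw)
    rw [Finset.sum_powerset_insert hi] at ha
    have hcomb₁ := hcomb 1 fun _ => one_pos
    rw [multiaffine_one, multiaffine_one] at hcomb₁
    rcases forall_eval_pos_or_of_forall_eval_add_pos
      (eventually_eval_sum_nonneg fun S hS => hFV S (Finset.mem_powerset.1 hS))
      (eventually_eval_sum_nonneg fun S hS => hFV' S (Finset.mem_powerset.1 hS)) hcomb₁ ha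
      with hV | hV'
    · obtain ⟨S, hS, hpos⟩ := ih hFV hsplitV hV
      exact ⟨S, hS.trans (Finset.subset_insert i V), hpos⟩
    · obtain ⟨S, hS, hpos⟩ := ih hFV' hsplitV' hV'
      exact ⟨insert i S, Finset.insert_subset_insert i hS, hpos⟩

end RealRooted

section DifferentialOperators

open MvPolynomial

theorem diffOp_sum_monomial {σ κ R : Type*} [Fintype σ] [CommSemiring R] (s : Finset κ)
    (e : κ → σ →₀ ℕ) (c : κ → R) (p : MvPolynomial σ R) :
    diffOp (∑ k ∈ s, monomial (e k) (c k)) p = ∑ k ∈ s, c k • applyMon (e k) p := by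
  classical
  have hsub : (∑ k ∈ s, monomial (e k) (c k)).support ⊆ s.image e := fun m hm => by
    contrapose! hm
    rw [notMem_support_iff, coeff_sum]
    refine Finset.sum_eq_zero fun k hk => ?_
    exact (coeff_monomial _ _ _).trans
      (if_neg fun h : e k = m => hm (h ▸ Finset.mem_image_of_mem e hk))
  rw [diffOp, Finset.sum_subset hsub fun m _ hm => by
    rw [notMem_support_iff.1 hm, zero_smul]]
  simp only [coeff_sum, coeff_monomial, Finset.sum_smul, ite_smul, zero_smul]
  rw [Finset.sum_comm]
  refine Finset.sum_congr rfl fun k hk => ?_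
  rw [Finset.sum_ite_eq, if_pos (Finset.mem_image_of_mem e hk)]

theorem applyMon_indicator_one {σ R : Type*} [Fintype σ] [DecidableEq σ] [CommSemiring R]
    {G : Finset σ → MvPolynomial σ R} (hG : ∀ V i, i ∉ V → pderiv i (G (insert i V)) = G V)
    (T : Finset σ) :
    applyMon (Finsupp.indicator T fun _ _ => 1) (G Finset.univ) = G Tᶜ := by
  have hfoldr : ∀ l : List σ, l.Nodup →
      l.foldr (fun i g => (fun h => pderiv i h)^[Finsupp.indicator T (fun _ _ => 1) i] g)
        (G Finset.univ) = G (l.toFinset ∩ T)ᶜ := by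
    intro l hl
    induction l with
    | nil => simp
    | cons i l ih =>
      obtain ⟨hil, hl⟩ := List.nodup_cons.1 hl
      rw [List.foldr_cons, ih hl, List.toFinset_cons]
      by_cases hi : i ∈ T
      · have hins : (l.toFinset ∩ T)ᶜ = insert i (insert i l.toFinset ∩ T)ᶜ := by
          ext j
          by_cases hj : j = i <;> simp [hj, hil]
        rw [Finsupp.indicator_of_mem hi, Function.iterate_one, hins]
        exact hG _ i (by simp [hi])
      · rw [Finsupp.indicator_of_notMem hi, Function.iterate_zero, id_eq,
          Finset.insert_inter_of_notMem hi]
  rw [applyMon, hfoldr _ (Finset.nodup_toList _), Finset.toList_toFinset, Finset.univ_inter]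

section

variable {σ R : Type*} [DecidableEq σ]

theorem pderiv_multiaffineFlip_of_notMem [CommSemiring R] {V : Finset σ} {i : σ} (hi : i ∉ V)
    (c : Finset σ → R) :
    pderiv i (multiaffineFlip V (fun S => C (c S)) (X : σ → MvPolynomial σ R)) = 0 := by
  have hprod : ∀ S : Finset σ, pderiv i (∏ j ∈ V \ S, (X j : MvPolynomial σ R)) = 0 := fun S =>
    Finset.prod_induction _ (fun p => pderiv i p = 0)
      (fun p q hp hq => by rw [pderiv_mul, hp, hq, zero_mul, mul_zero, add_zero]) pderiv_one
      fun j hj => pderiv_X_of_ne fun h => hi (h ▸ (Finset.mem_sdiff.1 hj).1)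
  rw [multiaffineFlip, map_sum]
  refine Finset.sum_eq_zero fun S _ => ?_
  rw [smul_eq_mul, pderiv_mul, hprod, pderiv_C, zero_mul, mul_zero, add_zero]

theorem pderiv_multiaffineFlip_insert [CommSemiring R] {V : Finset σ} {i : σ} (hi : i ∉ V)
    (c : Finset σ → R) :
    pderiv i (multiaffineFlip (insert i V) (fun S => C (c S)) (X : σ → MvPolynomial σ R)) =
      multiaffineFlip V (fun S => C (c S)) (X : σ → MvPolynomial σ R) := by
  have hX := multiaffineFlip_insert_update hi (fun S => (C (c S) : MvPolynomial σ R))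
    (X : σ → MvPolynomial σ R) (X i)
  rw [Function.update_eq_self] at hX
  rw [hX, map_add, pderiv_multiaffineFlip_of_notMem hi fun S => c (insert i S), smul_eq_mul,
    pderiv_mul, pderiv_X_self, pderiv_multiaffineFlip_of_notMem hi, one_mul, mul_zero, zero_add,
    add_zero]

theorem pderiv_principalMinor_add_diagonal_X [Finite σ] [CommRing R] (M : Matrix σ σ R)
    {V : Finset σ} {i : σ} (hi : i ∉ V) :
    pderiv i (principalMinor (M.map C + Matrix.diagonal X) (insert i V)) =
      principalMinor (M.map C + Matrix.diagonal X) V := by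
  simp only [principalMinor_add_diagonal, funext (principalMinor_map (C (σ := σ)) M),
    pderiv_multiaffineFlip_insert hi]

end

theorem flipGenPolyC_eq_sum_monomial {n : ℕ} (μ : Finset (Fin n) → ℝ) :
    flipGenPolyC μ =
      ∑ S : Finset (Fin n), monomial (Finsupp.indicator Sᶜ fun _ _ => 1) (μ S : ℂ) := by
  refine Finset.sum_congr rfl fun S _ => ?_
  have hprod := prod_X_pow (R := ℂ) (fun _ => 1) Sᶜ
  simp only [pow_one] at hprod
  rw [hprod, C_mul_monomial, mul_one]

theorem detZSub_eq_principalMinor {n : ℕ} (A : Matrix (Fin n) (Fin n) ℂ) :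
    detZSub A = principalMinor ((-A).map C + Matrix.diagonal X) Finset.univ := by
  rw [principalMinor_univ, detZSub, sub_eq_neg_add, Matrix.map_neg _ (map_neg C)]

theorem eval_diffOp_flipGenPolyC_detZSub {n : ℕ} (μ : Finset (Fin n) → ℝ)
    (A : Matrix (Fin n) (Fin n) ℂ) (x : ℂ) :
    eval (fun _ => x) (diffOp (flipGenPolyC μ) (detZSub A)) =
      ∑ S : Finset (Fin n), (μ S : ℂ) * principalMinor (Matrix.diagonal (fun _ => x) - A) S := by
  have heval : ((-A).map C + Matrix.diagonal X).map (eval fun _ => x) =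
      Matrix.diagonal (fun _ => x) - A := by
    ext i j
    by_cases h : i = j <;> simp [h, neg_add_eq_sub]
  rw [flipGenPolyC_eq_sum_monomial, diffOp_sum_monomial, detZSub_eq_principalMinor, map_sum]
  refine Finset.sum_congr rfl fun S _ => ?_
  rw [applyMon_indicator_one fun V i => pderiv_principalMinor_add_diagonal_X (-A), compl_compl,
    smul_eval, ← principalMinor_map, heval]

end DifferentialOperators

section ExpectedCharpoly

open Polynomial Filter

/-- The characteristic polynomial of a hermitian matrix, with real coefficients. -/
noncomputable def realCharpoly {ι : Type*} [Fintype ι] [DecidableEq ι] {A : Matrix ι ι ℂ}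
    (hA : A.IsHermitian) : ℝ[X] :=
  ∏ i, (X - C (hA.eigenvalues i))

theorem map_realCharpoly {ι : Type*} [Fintype ι] [DecidableEq ι] {A : Matrix ι ι ℂ}
    (hA : A.IsHermitian) : (realCharpoly hA).map (algebraMap ℝ ℂ) = A.charpoly := by
  rw [hA.charpoly_eq, realCharpoly, Polynomial.map_prod]
  simp

theorem eventually_eval_realCharpoly_pos {ι : Type*} [Fintype ι] [DecidableEq ι]
    {A : Matrix ι ι ℂ} (hA : A.IsHermitian) : ∀ᶠ x in atTop, 0 < (realCharpoly hA).eval x := by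
  filter_upwards [eventually_all.2 fun i => eventually_gt_atTop (hA.eigenvalues i)] with x hx
  rw [realCharpoly, eval_prod]
  exact Finset.prod_pos fun i _ => by simpa using hx i

theorem eval_re_realCharpoly_eq_zero {ι : Type*} [Fintype ι] [DecidableEq ι] {A : Matrix ι ι ℂ}
    (hA : A.IsHermitian) {z : ℂ} (hz : A.charpoly.IsRoot z) : (realCharpoly hA).eval z.re = 0 := by
  rw [hA.charpoly_eq, IsRoot.def, eval_prod, Finset.prod_eq_zero_iff] at hz
  obtain ⟨i, hi, hz⟩ := hz
  rw [eval_sub, eval_X, eval_C, sub_eq_zero] at hz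
  rw [realCharpoly, eval_prod]
  exact Finset.prod_eq_zero hi (by simp [hz])

variable {n : ℕ} {μ : Finset (Fin n) → ℝ} {A : Matrix (Fin n) (Fin n) ℂ}

theorem eval_expCharPoly (μ : Finset (Fin n) → ℝ) (A : Matrix (Fin n) (Fin n) ℂ) (x : ℂ) :
    eval x (expCharPoly μ A) =
      ∑ S : Finset (Fin n), (μ S : ℂ) * principalMinor (Matrix.diagonal (fun _ => x) - A) S := by
  rw [expCharPoly, eval_finsetSum]
  refine Finset.sum_congr rfl fun S _ => ?_
  rw [eval_mul, eval_C, Matrix.eval_charpoly, principalMinor, Matrix.submatrix_sub, Pi.sub_apply,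
    Pi.sub_apply, Matrix.submatrix_diagonal _ _ Subtype.val_injective]
  rfl

theorem subMat_isHermitian (hA : A.IsHermitian) (S : Finset (Fin n)) : (subMat A S).IsHermitian :=
  hA.submatrix _

/-- The expected characteristic polynomial of a hermitian matrix, with real coefficients. -/
noncomputable def realExpCharPoly (μ : Finset (Fin n) → ℝ) (hA : A.IsHermitian) : ℝ[X] :=
  ∑ S : Finset (Fin n), C (μ S) * realCharpoly (subMat_isHermitian hA S)

theorem map_realExpCharPoly (μ : Finset (Fin n) → ℝ) (hA : A.IsHermitian) :
    (realExpCharPoly μ hA).map (algebraMap ℝ ℂ) = expCharPoly μ A := by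
  simp only [realExpCharPoly, expCharPoly, Polynomial.map_sum, Polynomial.map_mul, map_C,
    map_realCharpoly, Complex.coe_algebraMap]

theorem multiaffine_C_mul_realCharpoly (μ : Finset (Fin n) → ℝ) (hA : A.IsHermitian)
    (w : Fin n → ℝ) :
    multiaffine Finset.univ (fun S => C (μ S) * realCharpoly (subMat_isHermitian hA S)) w =
      realExpCharPoly (fun S => (∏ i ∈ S, w i) * μ S) hA := by
  simp only [multiaffine, realExpCharPoly, Finset.powerset_univ, smul_eq_C_mul, C_mul, mul_assoc]

theorem aeval_genPoly (μ : Finset (Fin n) → ℝ) (z : Fin n → ℂ) :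
    MvPolynomial.aeval z (genPoly μ) = multiaffine Finset.univ (fun S => (μ S : ℂ)) z := by
  simp [genPoly, multiaffine, mul_comm]

theorem RealStable.genPoly_prod_mul (h : RealStable (genPoly μ)) {w : Fin n → ℝ}
    (hw : ∀ i, 0 < w i) : RealStable (genPoly fun S => (∏ i ∈ S, w i) * μ S) := by
  intro z hz
  convert h (fun i => w i * z i) fun i => by simpa using mul_pos (hw i) (hz i) using 1
  simp only [aeval_genPoly, multiaffine, Finset.prod_mul_distrib, smul_eq_mul]
  push_cast
  exact Finset.sum_congr rfl fun S _ => by ring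

theorem aeval_realExpCharPoly_ne_zero (h : RealStable (genPoly μ)) (hA : A.IsHermitian) {z : ℂ}
    (hz : z.im ≠ 0) : aeval z (realExpCharPoly μ hA) ≠ 0 := by
  have hpos : ∀ z : ℂ, 0 < z.im → aeval z (realExpCharPoly μ hA) ≠ 0 := fun z hz => by
    rw [← eval_map_algebraMap, map_realExpCharPoly, eval_expCharPoly]
    exact sum_mul_principalMinor_ne_zero hA hz fun w hw => aeval_genPoly μ w ▸ h w hw
  rcases hz.lt_or_gt with hz | hz
  · intro h₀
    refine hpos (starRingEnd ℂ z) (by simpa using hz) ?_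
    rw [aeval_conj, h₀, map_zero]
  · exact hpos z hz

theorem splits_realExpCharPoly (h : RealStable (genPoly μ)) (hA : A.IsHermitian) :
    (realExpCharPoly μ hA).Splits :=
  splits_real_of_forall_im_eq_zero fun _ hz =>
    by_contra fun hz' => aeval_realExpCharPoly_ne_zero h hA hz' hz

theorem realExpCharPoly_ne_zero (h : RealStable (genPoly μ)) (hA : A.IsHermitian) :
    realExpCharPoly μ hA ≠ 0 := fun h₀ =>
  aeval_realExpCharPoly_ne_zero h hA (z := Complex.I) (by simp) (by rw [h₀, map_zero])

theorem im_eq_zero_of_isRoot_expCharPoly (h : RealStable (genPoly μ)) (hA : A.IsHermitian) {z : ℂ}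
    (hz : (expCharPoly μ A).IsRoot z) : z.im = 0 := by
  rw [← map_realExpCharPoly μ hA, IsRoot.def, eval_map_algebraMap] at hz
  exact im_eq_zero_of_splits (splits_realExpCharPoly h hA) (realExpCharPoly_ne_zero h hA) hz

theorem eventually_eval_C_mul_realCharpoly_nonneg (hμ : ∀ S, 0 ≤ μ S) (hA : A.IsHermitian)
    (S : Finset (Fin n)) :
    ∀ᶠ x in atTop, 0 ≤ (C (μ S) * realCharpoly (subMat_isHermitian hA S)).eval x := by
  filter_upwards [eventually_eval_realCharpoly_pos (subMat_isHermitian hA S)] with x hx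
  rw [eval_C_mul]
  exact mul_nonneg (hμ S) hx.le

theorem eventually_eval_realExpCharPoly_pos (hμ : ∀ S, 0 ≤ μ S) (h : RealStable (genPoly μ))
    (hA : A.IsHermitian) : ∀ᶠ x in atTop, 0 < (realExpCharPoly μ hA).eval x :=
  eventually_eval_pos
    (eventually_eval_sum_nonneg fun S _ => eventually_eval_C_mul_realCharpoly_nonneg hμ hA S)
    (realExpCharPoly_ne_zero h hA)

theorem exists_pos_forall_eval_realCharpoly_pos (hμ : ∀ S, 0 ≤ μ S) (h : RealStable (genPoly μ))
    (hA : A.IsHermitian) {a : ℝ} (ha : ∀ x, a < x → 0 < (realExpCharPoly μ hA).eval x) :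
    ∃ S, 0 < μ S ∧ ∀ x, a < x → 0 < (realCharpoly (subMat_isHermitian hA S)).eval x := by
  obtain ⟨S, -, hS⟩ := exists_subset_forall_eval_pos (U := Finset.univ)
    (F := fun S => C (μ S) * realCharpoly (subMat_isHermitian hA S))
    (fun S _ => eventually_eval_C_mul_realCharpoly_nonneg hμ hA S)
    (fun w hw => by
      rw [multiaffine_C_mul_realCharpoly]
      exact splits_realExpCharPoly (h.genPoly_prod_mul hw) hA)
    (by rwa [Finset.powerset_univ])
  simp only [eval_C_mul] at hS
  have hμS : 0 < μ S := (hμ S).lt_of_ne fun h₀ => by simpa [← h₀] using hS (a + 1) (lt_add_one a)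
  exact ⟨S, hμS, fun x hx => (mul_pos_iff_of_pos_left hμS).1 (hS x hx)⟩

theorem exists_pos_forall_isRoot_charpoly_re_le (hμ : ∀ S, 0 ≤ μ S) (h : RealStable (genPoly μ))
    (hA : A.IsHermitian) :
    ∃ S, 0 < μ S ∧ ∀ z : ℂ, (subMat A S).charpoly.IsRoot z →
      z.re ≤ sSup {x : ℝ | eval (x : ℂ) (expCharPoly μ A) = 0} := by
  have hroots : {x : ℝ | eval (x : ℂ) (expCharPoly μ A) = 0} =
      {x | (realExpCharPoly μ hA).IsRoot x} := by
    ext x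
    rw [Set.mem_ofPred_eq, Set.mem_ofPred_eq, ← map_realExpCharPoly μ hA, eval_map_algebraMap,
      aeval_complex_ofReal, Complex.ofReal_eq_zero, IsRoot.def]
  obtain ⟨S, hμS, hS⟩ := exists_pos_forall_eval_realCharpoly_pos hμ h hA fun _ =>
    eval_pos_of_sSup_isRoot_lt (eventually_eval_realExpCharPoly_pos hμ h hA)
  refine ⟨S, hμS, fun z hz => ?_⟩
  rw [hroots]
  by_contra! hlt
  exact (hS _ hlt).ne' (eval_re_realCharpoly_eq_zero _ hz)

end ExpectedCharpoly

/-- Sampling from a Strongly Rayleigh measure: the expected characteristic polynomial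
is real rooted, some set in the support has all eigenvalues of `A(S)` at most its
largest root, and it is given by the formula
`E_μ χ[A(S)] = [P̄_μ(∂₁,…,∂ₙ) det(Z−A)]|_{z₁=⋯=zₙ=x}`. -/
theorem strongly_rayleigh_expected_charpoly {n : ℕ} (μ : Finset (Fin n) → ℝ)
    (hμ0 : ∀ S, 0 ≤ μ S) (hμ1 : ∑ S : Finset (Fin n), μ S = 1)
    (hμe : μ ∅ = 0) (hSR : RealStable (genPoly μ))
    (A : Matrix (Fin n) (Fin n) ℂ) (hA : A.IsHermitian) :
    (∀ z : ℂ, (expCharPoly μ A).IsRoot z → z.im = 0) ∧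
      (∃ S : Finset (Fin n), 0 < μ S ∧
        ∀ z : ℂ, ((subMat A S).charpoly).IsRoot z →
          z.re ≤ sSup {x : ℝ | Polynomial.eval (x : ℂ) (expCharPoly μ A) = 0}) ∧
      (∀ x : ℂ, Polynomial.eval x (expCharPoly μ A) =
        MvPolynomial.eval (fun _ => x) (diffOp (flipGenPolyC μ) (detZSub A))) := by
  exact ⟨fun z => im_eq_zero_of_isRoot_expCharPoly hSR hA,
    exists_pos_forall_isRoot_charpoly_re_le hμ0 hSR hA,
    fun x => by rw [eval_expCharPoly, eval_diffOp_flipGenPolyC_detZSub]⟩
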